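/- Let R be a commutative noetherian ring, let J be a Gorenstein injective R-module, and let p be a prime ideal of R that is maximal in the small support of J; that is, width_{R_p}(J_p) < ∞ and width_{R_q}(J_q) = ∞ for every prime ideal q strictly containing p. Then width_{R_p}(J_p) = depth(R_p); equivalently, Tor_i^{R_p}(κ(p), J_p) = 0 for i < depth(R_p) and Tor_d^{R_p}(κ(p), J_p) ≠ 0 for d = depth(R_p). -/

import Mathlib

/-!
Let `R` be a commutative noetherian ring, `J` a Gorenstein injective `R`-module, and `p`
a prime ideal that is maximal in the small support of `J`: `width_{R_p} J_p < ∞` and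
`width_{R_q} J_q = ∞` for every prime `q` strictly containing `p`. Then
`width_{R_p} J_p = depth R_p`.
-/

universe u

open CategoryTheory

/-- A witness that `J` is a Gorenstein injective `R`-module: an exact complex `I` of
injective `R`-modules (with differentials `d i : I (i+1) →ₗ[R] I i`) such that
`Hom_R(E, I)` is exact for every injective `R`-module `E`, together with an
isomorphism `J ≅ ker (I 0 → I (-1))`. -/
structure GorensteinInjectiveWitness (R : Type u) [CommRing R]
    (J : Type u) [AddCommGroup J] [Module R J] : Type (u + 1) where
  I : ℤ → Type u
  [acg : ∀ i, AddCommGroup (I i)]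
  [mod : ∀ i, Module R (I i)]
  inj : ∀ i, Module.Injective R (I i)
  d : ∀ i : ℤ, I (i + 1) →ₗ[R] I i
  d_comp_d : ∀ i : ℤ, (d i).comp (d (i + 1)) = 0
  exact : ∀ i : ℤ, LinearMap.ker (d i) = LinearMap.range (d (i + 1))
  hom_exact : ∀ (E : Type u) [AddCommGroup E] [Module R E], Module.Injective R E →
    ∀ (i : ℤ) (f : E →ₗ[R] I (i + 1)), (d i).comp f = 0 →
      ∃ g : E →ₗ[R] I (i + 1 + 1), (d (i + 1)).comp g = f
  ker_iso : Nonempty (J ≃ₗ[R] LinearMap.ker (d (-1)))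

/-- `J` is a Gorenstein injective `R`-module. -/
def IsGorensteinInjective (R : Type u) [CommRing R]
    (J : Type u) [AddCommGroup J] [Module R J] : Prop :=
  Nonempty (GorensteinInjectiveWitness R J)

/-- The depth of a noetherian local ring `A`: the supremum (in `ℕ∞`) of lengths of
`A`-regular sequences contained in the maximal ideal. -/
noncomputable def ringDepth (A : Type u) [CommRing A] [IsLocalRing A] : ℕ∞ :=
  sSup {c : ℕ∞ | ∃ rs : List A, c = rs.length ∧
    (∀ r ∈ rs, r ∈ IsLocalRing.maximalIdeal A) ∧ RingTheory.Sequence.IsRegular A rs}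

/-- The width of a module `N` over a local ring `A`:
`inf { i | Tor_i^A(k, N) ≠ 0 } ∈ ℕ∞`, where `k` is the residue field of `A`. -/
noncomputable def modWidth (A : Type u) [CommRing A] [IsLocalRing A]
    (N : Type u) [AddCommGroup N] [Module A N] : ℕ∞ :=
  sInf {c : ℕ∞ | ∃ i : ℕ, c = i ∧
    ¬ Subsingleton (((Tor (ModuleCat.{u} A) i).obj
      (ModuleCat.of A (IsLocalRing.ResidueField A))).obj (ModuleCat.of A N))}


section PartOne

variable {R : Type u} [CommRing R]

lemma GI.inj_factor {Q X Y : Type u} [AddCommGroup Q] [Module R Q] [AddCommGroup X] [Module R X]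
    [AddCommGroup Y] [Module R Y] (hQ : Module.Injective R Q)
    (φ : X →ₗ[R] Y) (ψ : X →ₗ[R] Q) (h : ∀ x, φ x = 0 → ψ x = 0) :
    ∃ G : Y →ₗ[R] Q, ∀ x, G (φ x) = ψ x := by
  obtain ⟨G, hG⟩ := hQ.out ((LinearMap.ker φ).liftQ φ le_rfl)
    (by rw [← LinearMap.ker_eq_bot]; exact Submodule.ker_liftQ_eq_bot _ _ _ le_rfl)
    ((LinearMap.ker φ).liftQ ψ (fun x hx => h x hx))
  exact ⟨G, fun x => hG (Submodule.Quotient.mk x)⟩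

lemma GI.inj_solve {Q : Type u} [AddCommGroup Q] [Module R Q] (hQ : Module.Injective R Q)
    (a : Ideal R) (s : R) (y : Q) (h : ∀ r, r * s ∈ a → r • y = 0) :
    ∃ q : Q, (∀ t ∈ a, t • q = 0) ∧ s • q = y := by
  obtain ⟨G, hG⟩ := GI.inj_factor hQ ((a.mkQ : R →ₗ[R] R ⧸ a).comp (LinearMap.toSpanSingleton R R s))
    (LinearMap.toSpanSingleton R Q y) (fun x hx => by
      have : x * s ∈ a := (Submodule.Quotient.mk_eq_zero a).mp hx
      simpa using h x this)
  refine ⟨G (a.mkQ 1), fun t ht => ?_, ?_⟩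
  · rw [← map_smul, ← map_smul]
    have : a.mkQ (t • (1 : R)) = 0 :=
      (Submodule.Quotient.mk_eq_zero a).mpr (by simpa using ht)
    rw [this, map_zero]
  · have := hG 1
    simp only [LinearMap.comp_apply, LinearMap.toSpanSingleton_apply, one_smul] at this
    rw [← map_smul, ← map_smul, smul_eq_mul, mul_one, this]

/-- The `b`-power torsion submodule. -/
def GI.Gam (b : Ideal R) (M : Type u) [AddCommGroup M] [Module R M] : Submodule R M where
  carrier := {y | ∃ n : ℕ, ∀ r ∈ b ^ n, r • y = 0}
  zero_mem' := ⟨0, fun r _ => smul_zero r⟩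
  add_mem' := by
    rintro x y ⟨n, hn⟩ ⟨m, hm⟩
    refine ⟨n + m, fun r hr => ?_⟩
    rw [smul_add, hn r (Ideal.pow_le_pow_right (Nat.le_add_right _ _) hr),
      hm r (Ideal.pow_le_pow_right (Nat.le_add_left _ _) hr), add_zero]
  smul_mem' := by
    rintro c x ⟨n, hn⟩
    exact ⟨n, fun r hr => by rw [smul_comm, hn r hr, smul_zero]⟩

lemma GI.mem_Gam {b : Ideal R} {M : Type u} [AddCommGroup M] [Module R M] {y : M} :
    y ∈ GI.Gam b M ↔ ∃ n : ℕ, ∀ r ∈ b ^ n, r • y = 0 := Iff.rfl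

lemma GI.Gam_map {b : Ideal R} {M N : Type u} [AddCommGroup M] [Module R M]
    [AddCommGroup N] [Module R N] (f : M →ₗ[R] N) {y : M} (hy : y ∈ GI.Gam b M) :
    f y ∈ GI.Gam b N := by
  obtain ⟨n, hn⟩ := hy
  exact ⟨n, fun r hr => by rw [← map_smul, hn r hr, map_zero]⟩

/-- The submodule of elements killed by the ideal `a`. -/
def GI.Ann (a : Ideal R) (M : Type u) [AddCommGroup M] [Module R M] : Submodule R M where
  carrier := {y | ∀ r ∈ a, r • y = 0}
  zero_mem' := fun r _ => smul_zero r
  add_mem' := by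
    intro x y hx hy r hr
    rw [smul_add, hx r hr, hy r hr, add_zero]
  smul_mem' := by
    intro c x hx r hr
    rw [smul_comm, hx r hr, smul_zero]

lemma GI.mem_Ann {a : Ideal R} {M : Type u} [AddCommGroup M] [Module R M] {y : M} :
    y ∈ GI.Ann a M ↔ ∀ r ∈ a, r • y = 0 := Iff.rfl

lemma GI.Ann_map {a : Ideal R} {M N : Type u} [AddCommGroup M] [Module R M]
    [AddCommGroup N] [Module R N] (f : M →ₗ[R] N) {y : M} (hy : y ∈ GI.Ann a M) :
    f y ∈ GI.Ann a N :=
  fun r hr => by rw [← map_smul, hy r hr, map_zero]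

lemma GI.mem_Ann_sup {a : Ideal R} {x : R} {M : Type u} [AddCommGroup M] [Module R M] {y : M} :
    y ∈ GI.Ann (a ⊔ Ideal.span {x}) M ↔ y ∈ GI.Ann a M ∧ x • y = 0 := by
  constructor
  · intro h
    exact ⟨fun r hr => h r (Ideal.mem_sup_left hr),
      h x (Ideal.mem_sup_right (Ideal.mem_span_singleton_self x))⟩
  · rintro ⟨h1, h2⟩ r hr
    obtain ⟨s, hs, t, ht, rfl⟩ := Submodule.mem_sup.mp hr
    obtain ⟨c, rfl⟩ := Ideal.mem_span_singleton'.mp ht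
    rw [add_smul, h1 s hs, mul_smul, h2, smul_zero, add_zero]

lemma GI.mem_Gam_sup {b : Ideal R} {x : R} {M : Type u} [AddCommGroup M] [Module R M] {y : M} :
    y ∈ GI.Gam (b ⊔ Ideal.span {x}) M ↔ y ∈ GI.Gam b M ∧ ∃ k : ℕ, x ^ k • y = 0 := by
  constructor
  · rintro ⟨n, hn⟩
    exact ⟨⟨n, fun r hr => hn r (Ideal.pow_right_mono le_sup_left n hr)⟩,
      n, hn _ (Ideal.pow_mem_pow (Ideal.mem_sup_right (Ideal.mem_span_singleton_self x)) n)⟩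
  · rintro ⟨⟨n, hn⟩, k, hk⟩
    refine ⟨n + k, fun r hr => ?_⟩
    obtain ⟨s, hs, t, ht, rfl⟩ := Submodule.mem_sup.mp (Ideal.sup_pow_add_le_pow_sup_pow hr)
    rw [Ideal.span_singleton_pow] at ht
    obtain ⟨c, rfl⟩ := Ideal.mem_span_singleton'.mp ht
    rw [add_smul, hn s hs, mul_smul, hk, smul_zero, add_zero]

lemma GI.Gam_fg {b a : Ideal R} (ha : a.FG) {M : Type u} [AddCommGroup M] [Module R M]
    (g : a →ₗ[R] M) (hg : ∀ x, g x ∈ GI.Gam b M) : ∃ t : ℕ, ∀ r ∈ b ^ t, ∀ x, r • g x = 0 := by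
  have key : ∀ N : Submodule R M, N.FG → N ≤ GI.Gam b M → ∃ t : ℕ, ∀ r ∈ b ^ t, ∀ x ∈ N, r • x = 0 := by
    intro N hN
    induction N, hN using Submodule.fg_induction with
    | singleton x =>
      intro h
      obtain ⟨n, hn⟩ := h (Submodule.mem_span_singleton_self x)
      refine ⟨n, fun r hr y hy => ?_⟩
      obtain ⟨c, rfl⟩ := Submodule.mem_span_singleton.mp hy
      rw [smul_comm, hn r hr, smul_zero]
    | sup N1 N2 _ _ h1 h2 =>
      intro h
      obtain ⟨n, hn⟩ := h1 (le_sup_left.trans h)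
      obtain ⟨m, hm⟩ := h2 (le_sup_right.trans h)
      refine ⟨n + m, fun r hr y hy => ?_⟩
      obtain ⟨s, hs, t, ht, rfl⟩ := Submodule.mem_sup.mp hy
      rw [smul_add, hn r (Ideal.pow_le_pow_right (Nat.le_add_right _ _) hr) s hs,
        hm r (Ideal.pow_le_pow_right (Nat.le_add_left _ _) hr) t ht, add_zero]
  have : Module.Finite R a := Module.Finite.of_fg ha
  obtain ⟨t, ht⟩ := key (LinearMap.range g) (by
    rw [LinearMap.range_eq_map]; exact Submodule.FG.map _ Module.Finite.fg_top) (by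
    rintro _ ⟨x, rfl⟩; exact hg x)
  exact ⟨t, fun r hr x => ht r hr _ ⟨x, rfl⟩⟩

lemma GI.Gam_injective [IsNoetherianRing R] (b : Ideal R) {Q : Type u} [AddCommGroup Q]
    [Module R Q] (hQ : Module.Injective R Q) : Module.Injective R (GI.Gam b Q) := by
  apply Module.Baer.injective
  intro a g
  obtain ⟨t, ht⟩ := GI.Gam_fg (b := b) (IsNoetherian.noetherian a) ((GI.Gam b Q).subtype.comp g)
    (fun x => (g x).2)
  obtain ⟨k, hk⟩ := Ideal.exists_pow_inf_eq_pow_smul b (M := R) a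
  have hk' := hk (k + t) (Nat.le_add_right _ _)
  obtain ⟨G, hG⟩ := GI.inj_factor hQ ((b ^ (k + t)).mkQ.comp a.subtype)
    ((GI.Gam b Q).subtype.comp g) (by
      intro x hx
      have hx1 : (x : R) ∈ b ^ (k + t) := (Submodule.Quotient.mk_eq_zero _).mp hx
      have hx2 : (x : R) ∈ b ^ t • (a : Submodule R R) := by
        have : (x : R) ∈ b ^ (k + t) • (⊤ : Submodule R R) ⊓ a := ⟨by simpa using hx1, x.2⟩
        rw [hk', Nat.add_sub_cancel_left] at this
        exact Submodule.smul_mono le_rfl inf_le_right this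
      have key : ∀ z ∈ b ^ t • (a : Submodule R R), ∃ hz : z ∈ a, g ⟨z, hz⟩ = 0 := by
        intro z hz
        induction hz using Submodule.smul_induction_on' with
        | smul r hr n hn =>
          refine ⟨a.smul_mem r hn, ?_⟩
          have := ht r hr ⟨n, hn⟩
          apply Subtype.ext
          rw [show (⟨r • n, a.smul_mem r hn⟩ : a) = r • ⟨n, hn⟩ from rfl, map_smul]
          simpa using this
        | add x hx y hy h1 h2 =>
          obtain ⟨h1, h1'⟩ := h1
          obtain ⟨h2, h2'⟩ := h2
          refine ⟨a.add_mem h1 h2, ?_⟩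
          rw [show (⟨x + y, a.add_mem h1 h2⟩ : a) = ⟨x, h1⟩ + ⟨y, h2⟩ from rfl, map_add, h1', h2',
            add_zero]
      obtain ⟨hz, h0⟩ := key x hx2
      simp only [LinearMap.comp_apply, Submodule.subtype_apply]
      rw [show g x = 0 from h0]; rfl)
  refine ⟨LinearMap.codRestrict (GI.Gam b Q) (G.comp (b ^ (k + t)).mkQ) (fun c => ⟨k + t, fun r hr => ?_⟩),
    fun x hx => Subtype.ext ?_⟩
  · rw [LinearMap.comp_apply, ← map_smul, ← map_smul,
      show (b ^ (k + t)).mkQ (r • c) = 0 from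
        (Submodule.Quotient.mk_eq_zero _).mpr (Ideal.mul_mem_right c _ hr), map_zero]
  · exact hG ⟨x, hx⟩

lemma GI.inj_div [IsNoetherianRing R] {Q : Type u} [AddCommGroup Q] [Module R Q]
    (hQ : Module.Injective R Q) (x : R) (n : Q) (k : ℕ) :
    ∃ (j : ℕ) (n' : Q), x ^ j • (x ^ k • n' - n) = 0 := by
  -- annihilators of powers of `x` stabilize
  let f : ℕ →o Ideal R := ⟨fun j => LinearMap.ker (LinearMap.toSpanSingleton R R (x ^ j)), by
    intro i j hij r hr
    obtain ⟨c, rfl⟩ := Nat.exists_eq_add_of_le hij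
    simp only [LinearMap.mem_ker, LinearMap.toSpanSingleton_apply, smul_eq_mul] at hr ⊢
    rw [pow_add, ← mul_assoc, hr, zero_mul]⟩
  obtain ⟨j, hj⟩ := monotone_stabilizes_iff_noetherian.mpr (inferInstance : IsNoetherian R R) f
  obtain ⟨q, -, hq⟩ := GI.inj_solve hQ ⊥ (x ^ (j + k)) (x ^ j • n) (by
    intro r hr
    have h1 : r ∈ f (j + k) := (Submodule.mem_bot R).mp hr
    rw [← hj (j + k) (Nat.le_add_right _ _)] at h1
    have h2 : r * x ^ j = 0 := h1
    rw [← mul_smul, h2, zero_smul])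
  exact ⟨j, q, by rw [smul_sub, ← mul_smul, ← pow_add, hq, sub_self]⟩

variable {I : ℤ → Type u} [∀ i, AddCommGroup (I i)] [∀ i, Module R (I i)]

/-- Exactness of a subcomplex. -/
def GI.SubExact (d : ∀ i : ℤ, I (i + 1) →ₗ[R] I i) (S : ∀ i, Submodule R (I i)) : Prop :=
  ∀ i, ∀ y ∈ S (i + 1), d i y = 0 → ∃ z ∈ S (i + 1 + 1), d (i + 1) z = y

/-- A complex of injectives, exact. -/
structure GI.Cpx (d : ∀ i : ℤ, I (i + 1) →ₗ[R] I i) : Prop where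
  inj : ∀ i, Module.Injective R (I i)
  dd : ∀ i x, d i (d (i + 1) x) = 0
  ex : ∀ i y, d i y = 0 → ∃ z, d (i + 1) z = y

lemma GI.Gam_exact [IsNoetherianRing R] {d : ∀ i : ℤ, I (i + 1) →ₗ[R] I i} (h : GI.Cpx d)
    (b : Ideal R) : GI.SubExact d (fun i => GI.Gam b (I i)) := by
  have key : ∀ b : Ideal R, b.FG → ∀ c : Ideal R, GI.SubExact d (fun i => GI.Gam c (I i)) →
      GI.SubExact d (fun i => GI.Gam (c ⊔ b) (I i)) := by
    intro b hb
    induction b, hb using Submodule.fg_induction with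
    | singleton x =>
      intro c hc i y hy hdy
      change y ∈ GI.Gam (c ⊔ Ideal.span {x}) _ at hy
      obtain ⟨hy1, k, hk⟩ := GI.mem_Gam_sup.mp hy
      obtain ⟨z, hz, rfl⟩ := hc i y hy1 hdy
      obtain ⟨w, hw, hw'⟩ := hc (i + 1) (x ^ k • z) (Submodule.smul_mem _ _ hz)
        (by rw [map_smul, hk])
      obtain ⟨j, w', hj⟩ := GI.inj_div (GI.Gam_injective c (h.inj _)) x ⟨w, hw⟩ k
      have hj' : x ^ j • (x ^ k • (w' : I (i + 1 + 1 + 1)) - w) = 0 := congrArg Subtype.val hj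
      refine ⟨z - d (i + 1 + 1) w', GI.mem_Gam_sup.mpr ⟨Submodule.sub_mem _ hz
        (GI.Gam_map _ w'.2), j + k, ?_⟩, by rw [map_sub, h.dd, sub_zero]⟩
      have h2 := congrArg (d (i + 1 + 1)) hj'
      rw [map_smul, map_sub, map_smul, hw', map_zero, ← smul_sub, ← mul_smul, ← pow_add] at h2
      rw [← neg_sub, smul_neg, h2, neg_zero]
    | sup N1 N2 _ _ h1 h2 =>
      intro c hc
      have := h2 _ (h1 c hc)
      rwa [sup_assoc] at this
  have h0 : GI.SubExact d (fun i => GI.Gam (⊥ : Ideal R) (I i)) := by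
    intro i y _ hdy
    obtain ⟨z, hz⟩ := h.ex i y hdy
    refine ⟨z, ⟨1, fun r hr => ?_⟩, hz⟩
    rw [pow_one] at hr
    rw [(Submodule.mem_bot R).mp hr, zero_smul]
  have := key b (IsNoetherian.noetherian b) ⊥ h0
  rwa [bot_sup_eq] at this

lemma GI.Ann_div {Q : Type u} [AddCommGroup Q] [Module R Q] (hQ : Module.Injective R Q)
    {a : Ideal R} {x : R} (hx : ∀ r, r * x ∈ a → r ∈ a) {q : Q} (hq : q ∈ GI.Ann a Q) :
    ∃ q' ∈ GI.Ann a Q, x • q' = q :=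
  GI.inj_solve hQ a x q (fun r hr => hq r (hx r hr))

lemma GI.Ann_exact {d : ∀ i : ℤ, I (i + 1) →ₗ[R] I i} (h : GI.Cpx d)
    {a : Ideal R} {x : R} (hx : ∀ r, r * x ∈ a → r ∈ a)
    (ha : GI.SubExact d (fun i => GI.Ann a (I i))) :
    GI.SubExact d (fun i => GI.Ann (a ⊔ Ideal.span {x}) (I i)) := by
  intro i y hy hdy
  obtain ⟨hy1, hk⟩ := GI.mem_Ann_sup.mp hy
  obtain ⟨z, hz, rfl⟩ := ha i y hy1 hdy
  obtain ⟨w, hw, hw'⟩ := ha (i + 1) (x • z) (Submodule.smul_mem _ _ hz)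
    (by rw [map_smul, hk])
  obtain ⟨w', hw1, rfl⟩ := GI.Ann_div (h.inj _) hx hw
  refine ⟨z - d (i + 1 + 1) w', GI.mem_Ann_sup.mpr ⟨Submodule.sub_mem _ hz
        (GI.Ann_map _ hw1), ?_⟩, by rw [map_sub, h.dd, sub_zero]⟩
  rw [map_smul] at hw'
  rw [smul_sub, hw', sub_self]

end PartOne

section PartTwo

open CategoryTheory Abelian TensorProduct MonoidalCategory

lemma GI.dual_exact {A : Type u} [CommRing A] [IsLocalRing A] {X₀ X₁ X₂ : Type u}
    [AddCommGroup X₀] [Module A X₀] [AddCommGroup X₁] [Module A X₁] [AddCommGroup X₂] [Module A X₂]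
    (f : X₂ →ₗ[A] X₁) (g : X₁ →ₗ[A] X₀) (hfg : g.comp f = 0) :
    Function.Exact (f.lTensor (IsLocalRing.ResidueField A))
      (g.lTensor (IsLocalRing.ResidueField A)) ↔
    ∀ φ : X₁ →ₗ[A] IsLocalRing.ResidueField A, φ.comp f = 0 →
      ∃ ψ : X₀ →ₗ[A] IsLocalRing.ResidueField A, ψ.comp g = φ := by
  set K := IsLocalRing.ResidueField A
  have hres : ∀ {X : Type u} [AddCommGroup X] [Module A X] (φ : K ⊗[A] X →ₗ[K] K),
      ∃ φ' : X →ₗ[A] K, LinearMap.liftBaseChange K φ' = φ := by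
    intro X _ _ φ
    refine ⟨(φ.restrictScalars A).comp (TensorProduct.mk A K X 1), ?_⟩
    ext x
    simp
  have hcomp : ∀ {X Y : Type u} [AddCommGroup X] [Module A X] [AddCommGroup Y] [Module A Y]
      (h : X →ₗ[A] Y) (φ : Y →ₗ[A] K),
      (LinearMap.liftBaseChange K φ).comp (h.baseChange K) = LinearMap.liftBaseChange K (φ.comp h) := by
    intro X Y _ _ _ _ h φ
    ext x
    simp
  have hinj : ∀ {X : Type u} [AddCommGroup X] [Module A X] (φ φ' : X →ₗ[A] K),
      LinearMap.liftBaseChange K φ = LinearMap.liftBaseChange K φ' → φ = φ' := by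
    intro X _ _ φ φ' h
    ext x
    have := LinearMap.congr_fun h (1 ⊗ₜ x)
    simpa using this
  have hz : ∀ {X : Type u} [AddCommGroup X] [Module A X],
      LinearMap.liftBaseChange K (0 : X →ₗ[A] K) = 0 := by
    intro X _ _
    ext x
    simp
  constructor
  · intro h φ hφ
    have h1 : (LinearMap.liftBaseChange K φ).comp (f.baseChange K) = 0 := by
      rw [hcomp, hφ, hz]
    have h2 : LinearMap.ker (g.baseChange K) ≤ LinearMap.ker (LinearMap.liftBaseChange K φ) := by
      intro x hx
      obtain ⟨y, hy⟩ := (h x).mp hx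
      have := LinearMap.congr_fun h1 y
      rw [LinearMap.mem_ker, ← hy]
      exact this
    obtain ⟨ψ, hψ⟩ := LinearMap.exists_extend
      (((LinearMap.ker (g.baseChange K)).liftQ _ h2).comp
        (g.baseChange K).quotKerEquivRange.symm.toLinearMap)
    obtain ⟨ψ', rfl⟩ := hres ψ
    refine ⟨ψ', hinj _ _ ?_⟩
    rw [← hcomp]
    ext x
    have := LinearMap.congr_fun hψ ⟨g.baseChange K (1 ⊗ₜ x), LinearMap.mem_range_self _ _⟩
    have h3 : (g.baseChange K).quotKerEquivRange.symm
        ⟨g.baseChange K (1 ⊗ₜ x), LinearMap.mem_range_self _ _⟩ = Submodule.Quotient.mk (1 ⊗ₜ x) :=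
      (LinearEquiv.symm_apply_eq _).mpr rfl
    simp only [LinearMap.comp_apply, LinearEquiv.coe_coe] at this
    rw [h3] at this
    exact this
  · intro h x
    constructor
    · intro hx
      by_contra hnot
      have hx' : x ∉ LinearMap.range (f.baseChange K) := fun ⟨y, hy⟩ => hnot ⟨y, hy⟩
      obtain ⟨φ, hφ, hφ'⟩ := Submodule.exists_dual_map_eq_bot_of_notMem hx' inferInstance
      obtain ⟨φ', rfl⟩ := hres φ
      obtain ⟨ψ, hψ⟩ := h φ' (hinj _ _ (by
        rw [← hcomp, hz]
        ext y
        have : (LinearMap.liftBaseChange K φ') (f.baseChange K (1 ⊗ₜ y)) ∈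
          Submodule.map (LinearMap.liftBaseChange K φ') (LinearMap.range (f.baseChange K)) :=
          ⟨_, ⟨_, rfl⟩, rfl⟩
        rw [hφ'] at this
        exact this))
      apply hφ
      rw [← hψ, ← hcomp]
      have hx2 : g.baseChange K x = 0 := hx
      rw [LinearMap.comp_apply, hx2, map_zero]
    · rintro ⟨y, rfl⟩
      rw [← LinearMap.comp_apply, ← LinearMap.lTensor_comp, hfg, LinearMap.lTensor_zero]
      rfl

variable {A : Type u} [CommRing A] [IsLocalRing A]

/-- Vanishing of `Ext^i(N, k)`. -/
def GI.EV (A : Type u) [CommRing A] [IsLocalRing A] (i : ℕ)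
    (N : Type u) [AddCommGroup N] [Module A N] : Prop :=
  ∀ e : Ext (ModuleCat.of A N) (ModuleCat.of A (IsLocalRing.ResidueField A)) i, e = 0

lemma GI.EV_zero_iff (N : Type u) [AddCommGroup N] [Module A N] :
    GI.EV A 0 N ↔ ∀ φ : N →ₗ[A] IsLocalRing.ResidueField A, φ = 0 := by
  constructor
  · intro h φ
    have := (Ext.mk₀_eq_zero_iff _).mp (h (Ext.mk₀ (ModuleCat.ofHom φ)))
    simpa using congrArg ModuleCat.Hom.hom this
  · intro h e
    obtain ⟨f, rfl⟩ := (Ext.mk₀_bijective _ _).2 e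
    rw [Ext.mk₀_eq_zero_iff]
    ext1
    exact h f.hom

lemma GI.tor_iff (N : Type u) [AddCommGroup N] [Module A N] (i : ℕ) :
    Subsingleton (((Tor (ModuleCat.{u} A) i).obj
      (ModuleCat.of A (IsLocalRing.ResidueField A))).obj (ModuleCat.of A N)) ↔ GI.EV A i N := by
  cases i with
  | zero =>
    have e := (((tensoringLeft (ModuleCat.{u} A)).obj
      (ModuleCat.of A (IsLocalRing.ResidueField A))).leftDerivedZeroIsoSelf.app (ModuleCat.of A N))
    have e' := e.toLinearEquiv.toEquiv
    have h1 : Subsingleton (((Tor (ModuleCat.{u} A) 0).obj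
      (ModuleCat.of A (IsLocalRing.ResidueField A))).obj (ModuleCat.of A N)) ↔
      Subsingleton (IsLocalRing.ResidueField A ⊗[A] N) := e'.subsingleton_congr
    rw [h1, GI.EV_zero_iff]
    have h2 := GI.dual_exact (0 : PUnit.{u+1} →ₗ[A] N) (0 : N →ₗ[A] PUnit.{u+1}) (by simp)
    have h3 : Subsingleton (IsLocalRing.ResidueField A ⊗[A] N) ↔
      Function.Exact ((0 : PUnit.{u+1} →ₗ[A] N).lTensor (IsLocalRing.ResidueField A))
       ((0 : N →ₗ[A] PUnit.{u+1}).lTensor (IsLocalRing.ResidueField A)) := by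
      rw [LinearMap.lTensor_zero, LinearMap.lTensor_zero]
      constructor
      · intro h x
        simp [Subsingleton.elim x 0]
      · intro h
        refine ⟨fun x y => ?_⟩
        obtain ⟨_, rfl⟩ := (h x).mp rfl
        obtain ⟨_, rfl⟩ := (h y).mp rfl
        rfl
    rw [h3, h2]
    simp [eq_comm]
  | succ n =>
    let P := projectiveResolution (ModuleCat.of A N)
    have e := (P.isoLeftDerivedObj ((tensoringLeft (ModuleCat.{u} A)).obj
      (ModuleCat.of A (IsLocalRing.ResidueField A))) (n + 1)).toLinearEquiv.toEquiv
    have h1 := e.subsingleton_congr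
    have h4 : Subsingleton (((Tor (ModuleCat.{u} A) (n + 1)).obj
      (ModuleCat.of A (IsLocalRing.ResidueField A))).obj (ModuleCat.of A N)) ↔
      Function.Exact ((P.complex.d (n + 2) (n + 1)).hom.lTensor (IsLocalRing.ResidueField A))
       ((P.complex.d (n + 1) n).hom.lTensor (IsLocalRing.ResidueField A)) := by
      refine h1.trans ?_
      rw [← ModuleCat.isZero_iff_subsingleton]
      refine (HomologicalComplex.exactAt_iff_isZero_homology _ _).symm.trans ?_
      rw [HomologicalComplex.exactAt_iff' _ (n + 2) (n + 1) n (by simp) (by simp)]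
      rw [ShortComplex.ShortExact.moduleCat_exact_iff_function_exact]
      rfl
    rw [h4, GI.dual_exact _ _ (by
      have := congrArg ModuleCat.Hom.hom (P.complex.d_comp_d (n + 2) (n + 1) n)
      rw [ModuleCat.hom_comp] at this
      exact this)]
    constructor
    · intro h x
      obtain ⟨f, hf, rfl⟩ := P.extMk_surjective x (n + 2) rfl
      rw [P.extMk_eq_zero_iff _ _ _ _ n rfl]
      obtain ⟨ψ, hψ⟩ := h f.hom (by simpa using congrArg ModuleCat.Hom.hom hf)
      exact ⟨ModuleCat.ofHom ψ, by ext1; exact hψ⟩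
    · intro h φ hφ
      obtain ⟨g, hg⟩ := (P.extMk_eq_zero_iff (ModuleCat.ofHom φ) (n + 2) rfl
        (by ext1; exact hφ) n rfl).mp (h _)
      exact ⟨g.hom, by simpa using congrArg ModuleCat.Hom.hom hg⟩

lemma GI.EV_of_equiv {N N' : Type u} [AddCommGroup N] [Module A N] [AddCommGroup N'] [Module A N']
    (e : N ≃ₗ[A] N') {i : ℕ} (h : GI.EV A i N) : GI.EV A i N' := by
  intro x
  have h1 := h ((Ext.mk₀ (ModuleCat.ofHom e.toLinearMap)).comp x (zero_add i))
  have h2 := congrArg (fun y => (Ext.mk₀ (ModuleCat.ofHom e.symm.toLinearMap)).comp y (zero_add i)) h1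
  simp only [Ext.comp_zero, Ext.mk₀_comp_mk₀_assoc] at h2
  have h3 : ModuleCat.ofHom e.symm.toLinearMap ≫ ModuleCat.ofHom e.toLinearMap =
    𝟙 (ModuleCat.of A N') := by
    ext x; simp
  rw [h3, Ext.mk₀_id_comp] at h2
  exact h2

lemma GI.smul_residue {x : A} (hx : x ∈ IsLocalRing.maximalIdeal A)
    (y : IsLocalRing.ResidueField A) : x • y = 0 := by
  rw [Algebra.smul_def, IsLocalRing.ResidueField.algebraMap_eq,
    (IsLocalRing.residue_eq_zero_iff x).mpr hx, zero_mul]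

lemma GI.smul_comp_eq_zero {N : Type u} [AddCommGroup N] [Module A N] {x : A}
    (hx : x ∈ IsLocalRing.maximalIdeal A) {i : ℕ}
    (e : Ext (ModuleCat.of A N) (ModuleCat.of A (IsLocalRing.ResidueField A)) i) :
    (Ext.mk₀ (x • 𝟙 (ModuleCat.of A N))).comp e (zero_add i) = 0 := by
  rw [Ext.mk₀_smul, Ext.smul_comp, Ext.mk₀_id_comp, Ext.smul_eq_comp_mk₀]
  have : x • 𝟙 (ModuleCat.of A (IsLocalRing.ResidueField A)) = 0 := by
    ext1
    ext
    exact GI.smul_residue hx _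
  rw [this, Ext.mk₀_zero, Ext.comp_zero]

lemma GI.EV_of_bijective {N : Type u} [AddCommGroup N] [Module A N] {x : A}
    (hx : x ∈ IsLocalRing.maximalIdeal A) (hb : Function.Bijective (fun n : N => x • n)) (i : ℕ) :
    GI.EV A i N := by
  intro e
  let f : N ≃ₗ[A] N := LinearEquiv.ofBijective (LinearMap.lsmul A N x) hb
  have h1 := GI.smul_comp_eq_zero hx e
  have h2 := congrArg (fun y => (Ext.mk₀ (ModuleCat.ofHom f.symm.toLinearMap)).comp y (zero_add i)) h1
  simp only [Ext.comp_zero, Ext.mk₀_comp_mk₀_assoc] at h2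
  have h3 : ModuleCat.ofHom f.symm.toLinearMap ≫ (x • 𝟙 (ModuleCat.of A N)) =
    𝟙 (ModuleCat.of A N) := by
    ext y
    exact f.apply_symm_apply y
  rw [h3, Ext.mk₀_id_comp] at h2
  exact h2

lemma GI.shortExact {N₁ N₂ N₃ : Type u} [AddCommGroup N₁] [Module A N₁] [AddCommGroup N₂]
    [Module A N₂] [AddCommGroup N₃] [Module A N₃] (f : N₁ →ₗ[A] N₂) (g : N₂ →ₗ[A] N₃)
    (hf : Function.Injective f) (hg : Function.Surjective g) (hfg : Function.Exact f g) :
    ∃ w, (ShortComplex.mk (ModuleCat.ofHom f) (ModuleCat.ofHom g) w).ShortExact := by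
  refine ⟨by ext x; exact hfg.apply_apply_eq_zero x, ?_⟩
  exact { exact := (ShortComplex.ShortExact.moduleCat_exact_iff_function_exact _).mpr hfg
          mono_f := (ModuleCat.mono_iff_injective _).mpr hf
          epi_g := (ModuleCat.epi_iff_surjective _).mpr hg }

/-- Half exactness. -/
lemma GI.EV_mid {N₁ N₂ N₃ : Type u} [AddCommGroup N₁] [Module A N₁] [AddCommGroup N₂]
    [Module A N₂] [AddCommGroup N₃] [Module A N₃] (f : N₁ →ₗ[A] N₂) (g : N₂ →ₗ[A] N₃)
    (hf : Function.Injective f) (hg : Function.Surjective g) (hfg : Function.Exact f g) {i : ℕ}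
    (h1 : GI.EV A i N₁) (h3 : GI.EV A i N₃) : GI.EV A i N₂ := by
  obtain ⟨w, hS⟩ := GI.shortExact f g hf hg hfg
  intro e
  obtain ⟨x, hx⟩ := Ext.contravariant_sequence_exact₂ hS _ e (h1 _)
  rw [← hx, h3 x, Ext.comp_zero]

/-- Multiplication by `x ∈ m` surjective on `N` with kernel `K`. -/
lemma GI.EV_succ {K N : Type u} [AddCommGroup K] [Module A K] [AddCommGroup N]
    [Module A N] {x : A} (hx : x ∈ IsLocalRing.maximalIdeal A) (f : K →ₗ[A] N)
    (hf : Function.Injective f) (hs : ∀ n : N, ∃ n', x • n' = n)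
    (hfg : ∀ n : N, x • n = 0 ↔ ∃ y, f y = n) :
    (∀ i, GI.EV A i K → GI.EV A (i + 1) N) ∧
    (∀ i, GI.EV A i N → GI.EV A (i + 1) N → GI.EV A i K) := by
  obtain ⟨w, hS⟩ := GI.shortExact f (LinearMap.lsmul A N x) hf hs hfg
  have hw : ModuleCat.ofHom (LinearMap.lsmul A N x) = x • 𝟙 (ModuleCat.of A N) := by
    ext; rfl
  constructor
  · intro i h e
    obtain ⟨y, hy⟩ := Ext.contravariant_sequence_exact₃ hS _ e (by
      change (Ext.mk₀ (ModuleCat.ofHom (LinearMap.lsmul A N x))).comp e _ = 0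
      rw [hw]; exact GI.smul_comp_eq_zero hx e) (add_comm 1 i)
    rw [← hy, h y, Ext.comp_zero]
  · intro i h h' e
    obtain ⟨y, hy⟩ := Ext.contravariant_sequence_exact₁ hS _ e (add_comm 1 i) (h' _)
    rw [← hy, h y, Ext.comp_zero]

lemma GI.EV_zero_of_surj {N : Type u} [AddCommGroup N]
    [Module A N] {x : A} (hx : x ∈ IsLocalRing.maximalIdeal A) (hs : ∀ n : N, ∃ n', x • n' = n) :
    GI.EV A 0 N := by
  rw [GI.EV_zero_iff]
  intro φ
  ext n
  obtain ⟨n', rfl⟩ := hs n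
  rw [map_smul]
  exact GI.smul_residue hx _

lemma GI.EV_zero_smul {N : Type u} [AddCommGroup N] [Module A N] (h : GI.EV A 0 N) (n : N) :
    n ∈ IsLocalRing.maximalIdeal A • (⊤ : Submodule A N) := by
  rw [GI.EV_zero_iff] at h
  have h2 := (GI.dual_exact (0 : PUnit.{u+1} →ₗ[A] N) (0 : N →ₗ[A] PUnit.{u+1}) (by simp)).mpr
    (fun φ _ => ⟨0, by rw [h φ, LinearMap.zero_comp]⟩)
  rw [LinearMap.lTensor_zero, LinearMap.lTensor_zero] at h2
  obtain ⟨_, h3⟩ := (h2 ((1 : IsLocalRing.ResidueField A) ⊗ₜ[A] n)).mp rfl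
  have h4 := congrArg (TensorProduct.quotTensorEquivQuotSMul N (IsLocalRing.maximalIdeal A)) h3.symm
  have h5 : TensorProduct.quotTensorEquivQuotSMul N (IsLocalRing.maximalIdeal A)
    ((Ideal.Quotient.mk _ (1 : A)) ⊗ₜ[A] n) = Submodule.Quotient.mk ((1 : A) • n) :=
    TensorProduct.quotTensorEquivQuotSMul_mk_tmul _ _ _
  rw [one_smul] at h5
  rw [← Submodule.Quotient.mk_eq_zero, ← h5]
  refine Eq.trans h4 ?_
  exact map_zero _

end PartTwo

section PartThree

open IsLocalRing

variable {A : Type u} [CommRing A] [IsLocalRing A]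

/-- Weakly regular sequences modulo an ideal. -/
def GI.WR : Ideal A → List A → Prop
  | _, [] => True
  | a, x :: rs => (∀ r, r * x ∈ a → r ∈ a) ∧ GI.WR (a ⊔ Ideal.span {x}) rs

lemma GI.WR_of (rs : List A) : ∀ a : Ideal A,
    (∀ (i : ℕ) (h : i < rs.length), ∀ r, r * rs[i] ∈ a ⊔ Ideal.ofList (rs.take i) →
      r ∈ a ⊔ Ideal.ofList (rs.take i)) → GI.WR a rs := by
  induction rs with
  | nil => intro a _; trivial
  | cons x rs ih =>
    intro a h
    refine ⟨fun r hr => ?_, ih _ fun i hi r hr => ?_⟩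
    · simpa using h 0 (by simp) r (by simpa using hr)
    · have := h (i + 1) (by simpa using hi) r
      simp only [List.getElem_cons_succ, List.take_succ_cons, Ideal.ofList_cons, ← sup_assoc] at this
      exact this hr

lemma GI.WR_of_regular {rs : List A} (h : RingTheory.Sequence.IsWeaklyRegular A rs) :
    GI.WR ⊥ rs := by
  apply GI.WR_of
  intro i hi r hr
  rw [bot_sup_eq] at hr ⊢
  have h1 := h.regular_mod_prev i hi
  have h2 : Ideal.ofList (rs.take i) • (⊤ : Submodule A A) = Ideal.ofList (rs.take i) := by simp
  rw [h2] at h1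
  have h3 : rs[i] • (Submodule.Quotient.mk r : A ⧸ Ideal.ofList (rs.take i)) =
      rs[i] • (0 : A ⧸ Ideal.ofList (rs.take i)) := by
    rw [smul_zero, ← Submodule.Quotient.mk_smul, Submodule.Quotient.mk_eq_zero, smul_eq_mul,
      mul_comm]
    exact hr
  exact (Submodule.Quotient.mk_eq_zero _).mp (h1 h3)

variable {I : ℤ → Type u} [∀ i, AddCommGroup (I i)] [∀ i, Module A (I i)]

/-- The `a`-torsion of the cycles. -/
def GI.K (d : ∀ i : ℤ, I (i + 1) →ₗ[A] I i) (i : ℤ) (a : Ideal A) : Submodule A (I (i + 1)) :=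
  GI.Ann a _ ⊓ LinearMap.ker (d i)

lemma GI.chain {d : ∀ i : ℤ, I (i + 1) →ₗ[A] I i} (h : GI.Cpx d) (i : ℤ) (rs : List A) :
    ∀ a : Ideal A, GI.SubExact d (fun i => GI.Ann a (I i)) → (∀ r ∈ rs, r ∈ maximalIdeal A) →
      GI.WR a rs → (∀ j < rs.length, GI.EV A j (GI.K d i a)) ∧
        (GI.EV A rs.length (GI.K d i a) → GI.EV A 0 (GI.K d i (a ⊔ Ideal.ofList rs))) ∧
        GI.SubExact d (fun i => GI.Ann (a ⊔ Ideal.ofList rs) (I i)) := by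
  induction rs with
  | nil =>
    intro a ha _ _
    rw [show a ⊔ Ideal.ofList [] = a by simp]
    exact ⟨fun j hj => absurd hj (Nat.not_lt_zero _), id, ha⟩
  | cons x rs ih =>
    intro a ha hm hW
    have hx : x ∈ maximalIdeal A := hm x (by simp)
    obtain ⟨h1, h2, h3⟩ := ih (a ⊔ Ideal.span {x}) (GI.Ann_exact h hW.1 ha)
      (fun r hr => hm r (by simp [hr])) hW.2
    have hs : ∀ n : GI.K d i a, ∃ n' : GI.K d i a, x • n' = n := by
      rintro ⟨n, hn1, hn2⟩
      obtain ⟨z, hz, rfl⟩ := ha i n hn1 hn2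
      obtain ⟨z', hz', rfl⟩ := GI.Ann_div (h.inj _) hW.1 hz
      exact ⟨⟨d (i + 1) z', GI.Ann_map _ hz', h.dd _ _⟩, Subtype.ext (map_smul _ _ _).symm⟩
    have hle : GI.K d i (a ⊔ Ideal.span {x}) ≤ GI.K d i a :=
      fun y hy => ⟨(GI.mem_Ann_sup.mp hy.1).1, hy.2⟩
    have h0 := GI.EV_zero_of_surj hx hs
    obtain ⟨s1, s2⟩ := GI.EV_succ hx (Submodule.inclusion hle) (Submodule.inclusion_injective _) hs
      (fun n => by
        constructor
        · intro hn
          exact ⟨⟨n, GI.mem_Ann_sup.mpr ⟨n.2.1, congrArg Subtype.val hn⟩, n.2.2⟩, rfl⟩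
        · rintro ⟨y, rfl⟩
          exact Subtype.ext (GI.mem_Ann_sup.mp y.2.1).2)
    have hlow : ∀ j < (x :: rs).length, GI.EV A j (GI.K d i a) := by
      intro j hj
      cases j with
      | zero => exact h0
      | succ j => exact s1 j (h1 j (by simpa using hj))
    rw [Ideal.ofList_cons, ← sup_assoc]
    refine ⟨hlow, fun he => h2 (s2 _ (hlow _ (by simp)) he), h3⟩

/-- A maximal regular sequence. -/
lemma GI.exists_max (A : Type u) [CommRing A] [IsLocalRing A] [IsNoetherianRing A] :
    ∃ rs : List A, (∀ r ∈ rs, r ∈ maximalIdeal A) ∧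
    RingTheory.Sequence.IsRegular A rs ∧ ∃ s : A, s ∉ Ideal.ofList rs ∧
      ∀ t ∈ maximalIdeal A, t * s ∈ Ideal.ofList rs := by
  obtain ⟨_, ⟨rs, rfl, hm, hr⟩, hmax⟩ := set_has_maximal_iff_noetherian.mpr
    (inferInstance : IsNoetherian A A)
    {a : Ideal A | ∃ rs : List A, a = Ideal.ofList rs ∧ (∀ r ∈ rs, r ∈ maximalIdeal A) ∧
      RingTheory.Sequence.IsRegular A rs} ⟨_, [], rfl, by simp, RingTheory.Sequence.IsRegular.nil A A⟩
  refine ⟨rs, hm, hr, ?_⟩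
  have hle : Ideal.ofList rs ≤ maximalIdeal A := Ideal.span_le.mpr hm
  have hne : Nontrivial (A ⧸ Ideal.ofList rs) := Ideal.Quotient.nontrivial_iff.mpr
    (fun h => (maximalIdeal.isMaximal A).ne_top (top_le_iff.mp (h ▸ hle)))
  have hz : ∀ x ∈ maximalIdeal A, ¬ IsSMulRegular (A ⧸ Ideal.ofList rs) x := by
    intro x hx hreg
    have hw : RingTheory.Sequence.IsWeaklyRegular A (rs ++ [x]) := by
      rw [RingTheory.Sequence.isWeaklyRegular_append_iff,
        RingTheory.Sequence.isWeaklyRegular_singleton_iff]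
      refine ⟨hr.toIsWeaklyRegular, ?_⟩
      have h2 : Ideal.ofList rs • (⊤ : Submodule A A) = Ideal.ofList rs := by simp
      rw [h2]
      exact hreg
    have hm' : ∀ r ∈ rs ++ [x], r ∈ maximalIdeal A := by
      intro r hr
      rcases List.mem_append.mp hr with hr | hr
      · exact hm r hr
      · rw [List.mem_singleton.mp hr]; exact hx
    refine hmax _ ⟨rs ++ [x], rfl, hm', RingTheory.Sequence.IsRegular.of_isWeaklyRegular_of_mem_maximalIdeal A hm' hw⟩ ?_
    rw [Ideal.ofList_append, Ideal.ofList_singleton]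
    refine lt_of_le_of_ne le_sup_left (fun h => ?_)
    have hxa : x ∈ Ideal.ofList rs := by
      rw [h]; exact Ideal.mem_sup_right (Ideal.mem_span_singleton_self x)
    obtain ⟨u, v, huv⟩ := hne
    apply huv
    apply hreg
    have : ∀ w : A ⧸ Ideal.ofList rs, x • w = 0 := by
      intro w
      obtain ⟨w, rfl⟩ := Submodule.Quotient.mk_surjective _ w
      rw [← Submodule.Quotient.mk_smul, Submodule.Quotient.mk_eq_zero]
      exact Ideal.mul_mem_right _ _ hxa
    simp only [this]
  have hsub : (maximalIdeal A : Set A) ⊆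
      ⋃ q ∈ associatedPrimes A (A ⧸ Ideal.ofList rs), (q : Set A) := by
    rw [biUnion_associatedPrimes_eq_compl_regular]
    exact fun x hx => hz x hx
  obtain ⟨P, hP, hPm⟩ := (Ideal.subset_union_prime_finite
    (associatedPrimes.finite A (A ⧸ Ideal.ofList rs)) (f := id) ⊥ ⊥
    (fun q hq _ _ => IsAssociatedPrime.isPrime hq)).mp hsub
  obtain ⟨hPp, x, hx⟩ := isAssociatedPrime_iff.mp hP
  obtain ⟨s, rfl⟩ := Submodule.Quotient.mk_surjective _ x
  refine ⟨s, fun hs => ?_, fun t ht => ?_⟩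
  · apply hPp.ne_top
    rw [hx, (Submodule.Quotient.mk_eq_zero _).mpr hs]
    ext; simp
  · have := hPm ht
    simp only [id] at this
    rw [hx] at this
    have h3 : t • (Submodule.Quotient.mk s : A ⧸ Ideal.ofList rs) = 0 := by simpa using this
    rwa [← Submodule.Quotient.mk_smul, Submodule.Quotient.mk_eq_zero] at h3

lemma GI.soc_surj {d : ∀ i : ℤ, I (i + 1) →ₗ[A] I i} (h : GI.Cpx d) (i : ℤ) {a : Ideal A}
    (ha : GI.SubExact d (fun i => GI.Ann a (I i))) {s : A} (hs : s ∉ a)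
    (hsm : ∀ t ∈ maximalIdeal A, t * s ∈ a) (hE : GI.EV A 0 (GI.K d i a))
    (y : I (i + 1 + 1)) (hy : y ∈ GI.Ann (maximalIdeal A) (I (i + 1 + 1))) :
    ∃ z ∈ GI.Ann (maximalIdeal A) (I (i + 1 + 1 + 1)), d (i + 1 + 1) z = y := by
  obtain ⟨q, hq, rfl⟩ := GI.inj_solve (h.inj _) a s y (by
    intro r hr
    apply hy
    by_contra hcon
    have hu : IsUnit r := by simpa using hcon
    exact hs ((Ideal.unit_mul_mem_iff_mem a hu).mp hr))
  have key : ∀ n : GI.K d i a, n ∈ maximalIdeal A • (⊤ : Submodule A (GI.K d i a)) →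
      ∃ q' ∈ GI.Ann a (I (i + 1 + 1)), d (i + 1) q' = n ∧ s • q' = 0 := by
    intro n hn
    induction hn using Submodule.smul_induction_on' with
    | smul r hr n hn =>
      obtain ⟨z, hz, hz'⟩ := ha i n n.2.1 n.2.2
      refine ⟨r • z, Submodule.smul_mem _ _ hz, by rw [map_smul, hz']; rfl, ?_⟩
      rw [← mul_smul, mul_comm]
      exact hz _ (hsm r hr)
    | add x hx y hy h1 h2 =>
      obtain ⟨u, hu, hu', hu''⟩ := h1
      obtain ⟨v, hv, hv', hv''⟩ := h2
      exact ⟨u + v, Submodule.add_mem _ hu hv, by rw [map_add, hu', hv']; rfl,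
        by rw [smul_add, hu'', hv'', add_zero]⟩
  obtain ⟨q', h1, h2, h3⟩ := key ⟨d (i + 1) q, GI.Ann_map _ hq, h.dd _ _⟩ (GI.EV_zero_smul hE _)
  obtain ⟨z, hz, hz'⟩ := ha (i + 1) (q - q') (Submodule.sub_mem _ hq h1)
    (by rw [map_sub, h2, sub_self])
  refine ⟨s • z, fun t ht => ?_, ?_⟩
  · rw [← mul_smul]; exact hz _ (hsm t ht)
  · rw [map_smul, hz', smul_sub, h3, sub_zero]

lemma GI.Ann_semisimple (M : Type u) [AddCommGroup M] [Module A M] :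
    IsSemisimpleModule A (GI.Ann (maximalIdeal A) M) := by
  have ht : Module.IsTorsionBySet A (GI.Ann (maximalIdeal A) M) (maximalIdeal A : Set A) := by
    intro x a
    exact Subtype.ext (x.2 a a.2)
  let := ht.module
  let : Field (A ⧸ maximalIdeal A) := Ideal.Quotient.field _
  exact ht.isSemisimpleModule_iff.mp inferInstance

lemma GI.soc_lift {d : ∀ i : ℤ, I (i + 1) →ₗ[A] I i} (h : GI.Cpx d) (j : ℤ)
    (hsoc : ∀ y ∈ GI.Ann (maximalIdeal A) (I (j + 1)),
      ∃ z ∈ GI.Ann (maximalIdeal A) (I (j + 1 + 1)), d (j + 1) z = y)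
    {E : Type u} [AddCommGroup E] [Module A E] (g : E →ₗ[A] I (j + 1)) :
    ∃ k : E →ₗ[A] I (j + 1 + 1), ∀ e ∈ GI.Ann (maximalIdeal A) E, d (j + 1) (k e) = g e := by
  have := GI.Ann_semisimple (A := A) E
  let S2 := GI.Ann (maximalIdeal A) (I (j + 1 + 1))
  let S1 := GI.Ann (maximalIdeal A) (I (j + 1))
  have : IsSemisimpleModule A S2 := GI.Ann_semisimple _
  let π : S2 →ₗ[A] S1 := LinearMap.restrict (d (j + 1)) (fun y hy => GI.Ann_map _ hy)
  have hπ : Function.Surjective π := by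
    rintro ⟨y, hy⟩
    obtain ⟨z, hz, hz'⟩ := hsoc y hy
    exact ⟨⟨z, hz⟩, Subtype.ext hz'⟩
  obtain ⟨σ, hσ⟩ := IsSemisimpleModule.lifting_property π hπ
    (LinearMap.restrict g (fun y (hy : y ∈ GI.Ann (maximalIdeal A) E) => GI.Ann_map g hy) :
      GI.Ann (maximalIdeal A) E →ₗ[A] S1)
  obtain ⟨k, hk⟩ := GI.inj_factor (h.inj (j + 1 + 1)) (GI.Ann (maximalIdeal A) E).subtype
    (S2.subtype.comp σ) (fun x hx => by
      have : x = 0 := Subtype.ext hx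
      rw [this, map_zero])
  refine ⟨k, fun e he => ?_⟩
  have h1 := hk ⟨e, he⟩
  have h2 := congrArg Subtype.val (LinearMap.congr_fun hσ ⟨e, he⟩)
  simp only [Submodule.subtype_apply] at h1
  rw [h1]
  exact h2

/-- If every `f : E → Z` lifts to `I (j+1)`, and the socles are surjective, then `Hom(E,Z)=0`
for torsion modules `E`. -/
lemma GI.hom_zero [IsNoetherianRing A] {d : ∀ i : ℤ, I (i + 1) →ₗ[A] I i} (h : GI.Cpx d) (i : ℤ)
    (hsoc : ∀ y ∈ GI.Ann (maximalIdeal A) (I (i + 1 + 1)),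
      ∃ z ∈ GI.Ann (maximalIdeal A) (I (i + 1 + 1 + 1)), d (i + 1 + 1) z = y)
    {E : Type u} [AddCommGroup E] [Module A E]
    (hEt : ∀ e : E, e ∈ GI.Gam (maximalIdeal A) E)
    (hlift : ∀ f : E →ₗ[A] I (i + 1), (d i).comp f = 0 →
      ∃ g : E →ₗ[A] I (i + 1 + 1), (d (i + 1)).comp g = f)
    (f : E →ₗ[A] I (i + 1)) (hf : (d i).comp f = 0) : f = 0 := by
  have step : ∀ f : E →ₗ[A] I (i + 1), (d i).comp f = 0 → ∃ (n : ℕ) (x : Fin n → A)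
      (F : Fin n → E →ₗ[A] I (i + 1)), (∀ l, x l ∈ maximalIdeal A) ∧
      (∀ l, (d i).comp (F l) = 0) ∧ f = ∑ l, x l • F l := by
    intro f hf
    obtain ⟨g, rfl⟩ := hlift f hf
    obtain ⟨k, hk⟩ := GI.soc_lift h (i + 1) hsoc g
    obtain ⟨n, x, hx⟩ := Submodule.fg_iff_exists_fin_generating_family.mp
      (IsNoetherian.noetherian (maximalIdeal A))
    obtain ⟨G, hG⟩ := GI.inj_factor (h.inj (i + 1 + 1))
      (LinearMap.pi (fun l : ULift.{u} (Fin n) => LinearMap.lsmul A E (x l.down))) 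
      (g - (d (i + 1 + 1)).comp k) (fun e he => by
        rw [LinearMap.sub_apply, LinearMap.comp_apply, hk, sub_self]
        intro r hr
        have hle : maximalIdeal A ≤ LinearMap.ker (LinearMap.toSpanSingleton A E e) := by
          rw [← hx, Submodule.span_le]
          rintro _ ⟨l, rfl⟩
          have := congrFun he (ULift.up l)
          simpa using this
        simpa using hle hr)
    refine ⟨n, x, fun l => (d (i + 1)).comp (G.comp (LinearMap.single A (fun _ => E) (ULift.up l))),
      fun l => ?_, fun l => ?_, ?_⟩
    · rw [← hx]; exact Submodule.subset_span ⟨l, rfl⟩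
    · ext e; exact h.dd _ _
    · ext e
      have h1 := congrArg (d (i + 1)) (hG e)
      rw [LinearMap.sub_apply, map_sub, LinearMap.comp_apply, h.dd, sub_zero] at h1
      rw [LinearMap.comp_apply, ← h1]
      rw [LinearMap.sum_apply]
      simp only [LinearMap.smul_apply, LinearMap.comp_apply, ← map_smul]
      rw [← map_sum, ← map_sum]
      congr 2
      ext l
      simp only [LinearMap.pi_apply, LinearMap.lsmul_apply, Finset.sum_apply,
        LinearMap.single_apply]
      rw [Finset.sum_eq_single l.down]
      · simp
      · intro b _ hb
        exact Pi.single_eq_of_ne (fun hh => hb (by rw [hh])) _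
      · simp
  have kill : ∀ (n : ℕ) (f : E →ₗ[A] I (i + 1)), (d i).comp f = 0 → ∀ e : E,
      (∀ r ∈ maximalIdeal A ^ n, r • e = 0) → f e = 0 := by
    intro n
    induction n with
    | zero =>
      intro f _ e he
      have := he 1 (by simp)
      rw [one_smul] at this
      rw [this, map_zero]
    | succ n ih =>
      intro f hf e he
      obtain ⟨n', x, F, hx, hF, rfl⟩ := step f hf
      rw [LinearMap.sum_apply]
      refine Finset.sum_eq_zero fun l _ => ?_
      rw [LinearMap.smul_apply, ← map_smul]
      refine ih (F l) (hF l) _ (fun r hr => ?_)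
      rw [← mul_smul]
      exact he _ (by rw [pow_succ]; exact Ideal.mul_mem_mul hr (hx l))
  ext e
  obtain ⟨n, hn⟩ := hEt e
  exact kill n f hf e hn

lemma GI.EV_of_Gam_zero [IsNoetherianRing A] {d : ∀ i : ℤ, I (i + 1) →ₗ[A] I i} (h : GI.Cpx d)
    (i : ℤ) (hz : ∀ y ∈ GI.Gam (maximalIdeal A) (I (i + 1)), d i y = 0 → y = 0) (j : ℕ) :
    GI.EV A j (LinearMap.ker (d i)) := by
  let N : Ideal A → Submodule A (I (i + 1)) := fun c => GI.Gam c _ ⊓ LinearMap.ker (d i)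
  have key : ∀ b : Ideal A, b.FG → b ≤ maximalIdeal A → ∀ c : Ideal A,
      GI.EV A j (N (c ⊔ b)) → GI.EV A j (N c) := by
    intro b hb
    induction b, hb using Submodule.fg_induction with
    | singleton x =>
      intro hx c hc
      change GI.EV A j (N (c ⊔ Ideal.span {x})) at hc
      have hx' : x ∈ maximalIdeal A := hx (Ideal.mem_span_singleton_self x)
      have hle : N (c ⊔ Ideal.span {x}) ≤ N c := fun y hy => ⟨(GI.mem_Gam_sup.mp hy.1).1, hy.2⟩
      have hmem : ∀ y : N c, y ∈ LinearMap.range (Submodule.inclusion hle) ↔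
          ∃ k : ℕ, x ^ k • (y : I (i + 1)) = 0 := by
        intro y
        constructor
        · rintro ⟨z, rfl⟩
          exact (GI.mem_Gam_sup.mp z.2.1).2
        · intro hk
          exact ⟨⟨y, GI.mem_Gam_sup.mpr ⟨y.2.1, hk⟩, y.2.2⟩, rfl⟩
      refine GI.EV_mid (Submodule.inclusion hle) (LinearMap.range (Submodule.inclusion hle)).mkQ
        (Submodule.inclusion_injective _) (Submodule.mkQ_surjective _)
        (fun y => by simp [Submodule.Quotient.mk_eq_zero]) hc
        (GI.EV_of_bijective hx' ⟨?_, ?_⟩ j)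
      · change Function.Injective (LinearMap.lsmul A _ x)
        rw [injective_iff_map_eq_zero]
        intro y hy
        obtain ⟨y, rfl⟩ := Submodule.Quotient.mk_surjective _ y
        rw [LinearMap.lsmul_apply, ← Submodule.Quotient.mk_smul, Submodule.Quotient.mk_eq_zero,
          hmem] at hy
        obtain ⟨k, hk⟩ := hy
        rw [Submodule.Quotient.mk_eq_zero, hmem]
        refine ⟨k + 1, ?_⟩
        rw [pow_succ, mul_smul]
        exact hk
      · intro y
        obtain ⟨⟨y, hy1, hy2⟩, rfl⟩ := Submodule.Quotient.mk_surjective _ y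
        obtain ⟨z, hz, rfl⟩ := GI.Gam_exact h c i y hy1 hy2
        obtain ⟨k, w, hw⟩ := GI.inj_div (GI.Gam_injective c (h.inj _)) x ⟨z, hz⟩ 1
        refine ⟨Submodule.Quotient.mk ⟨d (i + 1) w, GI.Gam_map _ w.2, h.dd _ _⟩, ?_⟩
        change x • Submodule.Quotient.mk _ = _
        rw [← sub_eq_zero, ← Submodule.Quotient.mk_smul, ← Submodule.Quotient.mk_sub,
          Submodule.Quotient.mk_eq_zero, hmem]
        refine ⟨k, ?_⟩
        have h3 := congrArg (fun w => d (i + 1) (Subtype.val w)) hw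
        simpa [map_sub, smul_sub] using h3
    | sup N1 N2 _ _ h1 h2 =>
      intro hle c hc
      rw [← sup_assoc] at hc
      exact h1 (le_sup_left.trans hle) _ (h2 (le_sup_right.trans hle) _ hc)
  have h0 : GI.EV A j (N (⊥ ⊔ maximalIdeal A)) := by
    rw [bot_sup_eq, show N (maximalIdeal A) = ⊥ from
      (Submodule.eq_bot_iff _).mpr (fun y hy => hz y hy.1 hy.2)]
    refine GI.EV_of_bijective (x := 0) (zero_mem _) ⟨fun a b _ => Subsingleton.elim a b,
      fun b => ⟨0, Subsingleton.elim _ b⟩⟩ j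
  have h1 := key _ (IsNoetherian.noetherian _) le_rfl ⊥ h0
  have h2 : N ⊥ = LinearMap.ker (d i) := by
    refine inf_eq_right.mpr (fun y _ => ⟨1, fun r hr => ?_⟩)
    rw [pow_one] at hr
    rw [(Submodule.mem_bot A).mp hr, zero_smul]
  rwa [h2] at h1

end PartThree

section PartFour

open IsLocalRing

section LocMap

variable {R : Type u} [CommRing R] (S : Submonoid R)
variable {M N : Type u} [AddCommGroup M] [Module R M] [AddCommGroup N] [Module R N]

/-- The localized map, linear over the localization. -/
noncomputable def GI.L (f : M →ₗ[R] N) :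
    LocalizedModule S M →ₗ[Localization S] LocalizedModule S N :=
  (IsLocalizedModule.map S (LocalizedModule.mkLinearMap S M)
    (LocalizedModule.mkLinearMap S N) f).extendScalarsOfIsLocalization S (Localization S)

lemma GI.L_mk (f : M →ₗ[R] N) (m : M) (s : S) :
    GI.L S f (LocalizedModule.mk m s) = LocalizedModule.mk (f m) s :=
  IsLocalizedModule.map_LocalizedModules S f m s

lemma GI.mk_eq_zero {m : M} {s : S} :
    LocalizedModule.mk m s = 0 ↔ ∃ u : S, (u : R) • m = 0 := by
  rw [← LocalizedModule.zero_mk (S := S) (M := M) 1, LocalizedModule.mk_eq]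
  constructor
  · rintro ⟨u, hu⟩
    exact ⟨u, by simpa [Submonoid.smul_def] using hu⟩
  · rintro ⟨u, hu⟩
    refine ⟨u, ?_⟩
    simpa [Submonoid.smul_def] using hu

lemma GI.restrict_inj {E : Type u} [AddCommGroup E] [Module R E] [Module (Localization S) E]
    [IsScalarTower R (Localization S) E] (hE : Module.Injective (Localization S) E) :
    Module.Injective R E := by
  constructor
  intro X Y _ _ _ _ f hf g
  have hid : IsLocalizedModule S (LinearMap.id : E →ₗ[R] E) :=
    isLocalizedModule_id S E (Localization S)
  let g' : LocalizedModule S X →ₗ[Localization S] E :=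
    (IsLocalizedModule.map S (LocalizedModule.mkLinearMap S X)
      (LinearMap.id : E →ₗ[R] E) g).extendScalarsOfIsLocalization S (Localization S)
  have hg' : ∀ x, g' (LocalizedModule.mk x 1) = g x := fun x =>
    IsLocalizedModule.map_apply S (LocalizedModule.mkLinearMap S X)
      (LinearMap.id : E →ₗ[R] E) g x
  obtain ⟨k, hk⟩ := hE.out (GI.L S f) (IsLocalizedModule.map_injective S
    (LocalizedModule.mkLinearMap S X) (LocalizedModule.mkLinearMap S Y) f hf) g'
  refine ⟨(k.restrictScalars R).comp (LocalizedModule.mkLinearMap S Y), fun x => ?_⟩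
  have := hk (LocalizedModule.mk x 1)
  rw [GI.L_mk, hg'] at this
  exact this

lemma GI.L_cpx [IsNoetherianRing R] {I : ℤ → Type u} [∀ i, AddCommGroup (I i)]
    [∀ i, Module R (I i)] {d : ∀ i : ℤ, I (i + 1) →ₗ[R] I i} (h : GI.Cpx d) :
    GI.Cpx (I := fun i => LocalizedModule S (I i)) (fun i => GI.L S (d i)) := by
  constructor
  · intro i
    have := h.inj i
    exact Module.injective_of_isLocalizedModule S (LocalizedModule.mkLinearMap S (I i))
  · intro i x
    induction x using LocalizedModule.induction_on with
    | _ m s => rw [GI.L_mk, GI.L_mk, h.dd, LocalizedModule.zero_mk]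
  · intro i y hy
    induction y using LocalizedModule.induction_on with
    | _ m s =>
      rw [GI.L_mk, GI.mk_eq_zero] at hy
      obtain ⟨u, hu⟩ := hy
      obtain ⟨z, hz⟩ := h.ex i ((u : R) • m) (by rw [map_smul, hu])
      refine ⟨LocalizedModule.mk z (u * s), ?_⟩
      rw [GI.L_mk, hz]
      exact LocalizedModule.mk_cancel_common_left u s m

lemma GI.L_ker {J : Type u} [AddCommGroup J] [Module R J] (f : M →ₗ[R] N)
    (e : J ≃ₗ[R] LinearMap.ker f) :
    Nonempty (LocalizedModule S J ≃ₗ[Localization S] LinearMap.ker (GI.L S f)) := by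
  let φ : J →ₗ[R] M := (LinearMap.ker f).subtype.comp e.toLinearMap
  have hφ : Function.Injective φ := Subtype.val_injective.comp e.injective
  have h1 : Function.Injective (GI.L S φ) := IsLocalizedModule.map_injective S
    (LocalizedModule.mkLinearMap S J) (LocalizedModule.mkLinearMap S M) φ hφ
  have h2 : LinearMap.range (GI.L S φ) = LinearMap.ker (GI.L S f) := by
    ext y
    constructor
    · rintro ⟨x, rfl⟩
      induction x using LocalizedModule.induction_on with
      | _ m s =>
        rw [LinearMap.mem_ker, GI.L_mk, GI.L_mk, show f (φ m) = 0 from (e m).2,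
          LocalizedModule.zero_mk]
    · intro hy
      induction y using LocalizedModule.induction_on with
      | _ m s =>
        rw [LinearMap.mem_ker, GI.L_mk, GI.mk_eq_zero] at hy
        obtain ⟨u, hu⟩ := hy
        refine ⟨LocalizedModule.mk (e.symm ⟨(u : R) • m, by
          rw [LinearMap.mem_ker, map_smul, hu]⟩) (u * s), ?_⟩
        rw [GI.L_mk]
        simp only [φ, LinearMap.comp_apply, LinearEquiv.coe_coe, LinearEquiv.apply_symm_apply,
          Submodule.subtype_apply]
        exact LocalizedModule.mk_cancel_common_left u s m
  exact ⟨(LinearEquiv.ofInjective _ h1).trans (LinearEquiv.ofEq _ _ h2)⟩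

end LocMap

variable {R : Type u} [CommRing R] [IsNoetherianRing R] (p : Ideal R) [p.IsPrime]
variable {I : ℤ → Type u} [∀ i, AddCommGroup (I i)] [∀ i, Module R (I i)]
  {d : ∀ i : ℤ, I (i + 1) →ₗ[R] I i}

lemma GI.clear_den {M : Type u} [AddCommGroup M] [Module R M] (n : M) (a : Ideal R) (ha : a.FG)
    (h : ∀ r ∈ a, (LocalizedModule.mk (r • n) 1 : LocalizedModule p.primeCompl M) = 0) :
    ∃ v : p.primeCompl, ∀ r ∈ a, r • ((v : R) • n) = 0 := by
  induction a, ha using Submodule.fg_induction with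
  | singleton x =>
    obtain ⟨v, hv⟩ := (GI.mk_eq_zero _).mp (h x (Submodule.mem_span_singleton_self x))
    refine ⟨v, fun r hr => ?_⟩
    obtain ⟨c, rfl⟩ := Submodule.mem_span_singleton.mp hr
    rw [smul_assoc, smul_comm x, hv, smul_zero]
  | sup N1 N2 _ _ h1 h2 =>
    obtain ⟨v, hv⟩ := h1 (fun r hr => h r (Submodule.mem_sup_left hr))
    obtain ⟨w, hw⟩ := h2 (fun r hr => h r (Submodule.mem_sup_right hr))
    refine ⟨v * w, fun r hr => ?_⟩
    obtain ⟨s, hs, t, ht, rfl⟩ := Submodule.mem_sup.mp hr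
    rw [Submonoid.coe_mul, add_smul, mul_comm, mul_smul, smul_comm s, hv s hs,
      smul_comm (w : R) (v : R), smul_comm t, hw t ht, smul_zero, smul_zero, add_zero]

lemma GI.torsion_rep {M N : Type u} [AddCommGroup M] [Module R M] [AddCommGroup N] [Module R N]
    (f : M →ₗ[R] N) (y : LocalizedModule p.primeCompl M)
    (hy : y ∈ GI.Gam (maximalIdeal (Localization.AtPrime p)) (LocalizedModule p.primeCompl M))
    (hy0 : GI.L p.primeCompl f y = 0) :
    ∃ n ∈ GI.Gam p M, f n = 0 ∧ ∃ s, y = LocalizedModule.mk n s := by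
  induction y using LocalizedModule.induction_on with
  | _ m s =>
    rw [GI.L_mk, GI.mk_eq_zero] at hy0
    obtain ⟨u, hu⟩ := hy0
    obtain ⟨k, hk⟩ := hy
    obtain ⟨v, hv⟩ := GI.clear_den p m (p ^ k) (IsNoetherian.noetherian _) (by
      intro r hr
      have h1 : algebraMap R (Localization.AtPrime p) r ∈
          maximalIdeal (Localization.AtPrime p) ^ k := by
        rw [← Localization.AtPrime.map_eq_maximalIdeal, ← Ideal.map_pow]
        exact Ideal.mem_map_of_mem _ hr
      have h2 := hk _ h1
      rw [algebraMap_smul, LocalizedModule.smul'_mk, GI.mk_eq_zero] at h2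
      exact (GI.mk_eq_zero _).mpr h2)
    refine ⟨(u : R) • (v : R) • m, ⟨k, fun r hr => ?_⟩, ?_, u * (v * s), ?_⟩
    · rw [smul_comm, hv r hr, smul_zero]
    · rw [map_smul, map_smul, smul_comm, hu, smul_zero]
    · exact ((LocalizedModule.mk_cancel_common_left u _ _).trans
        (LocalizedModule.mk_cancel_common_left v s m)).symm

lemma GI.Gam_mk {M : Type u} [AddCommGroup M] [Module R M] {n : M} (hn : n ∈ GI.Gam p M) (s) :
    (LocalizedModule.mk n s : LocalizedModule p.primeCompl M) ∈
      GI.Gam (maximalIdeal (Localization.AtPrime p)) (LocalizedModule p.primeCompl M) := by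
  obtain ⟨k, hk⟩ := hn
  refine ⟨k, fun r hr => ?_⟩
  rw [← Localization.AtPrime.map_eq_maximalIdeal, ← Ideal.map_pow] at hr
  have : (Ideal.map (algebraMap R (Localization.AtPrime p)) (p ^ k)) ≤
      LinearMap.ker (LinearMap.toSpanSingleton (Localization.AtPrime p) _
        (LocalizedModule.mk n s : LocalizedModule p.primeCompl M)) := by
    rw [Ideal.map_le_iff_le_comap]
    intro r hr
    rw [Ideal.mem_comap, LinearMap.mem_ker, LinearMap.toSpanSingleton_apply, algebraMap_smul,
      LocalizedModule.smul'_mk, hk r hr, LocalizedModule.zero_mk]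
  simpa using this hr

/-- No strictly larger associated prime: elements outside `p` act injectively on torsion cycles. -/
lemma GI.torsion_inj {M : Type u} [AddCommGroup M] [Module R M]
    (hq : ∀ q : Ideal R, p < q → ¬ IsAssociatedPrime q M)
    {t : M} (ht : t ∈ GI.Gam p M) {s : R} (hs : s ∉ p) (h0 : s • t = 0) : t = 0 := by
  by_contra hne
  obtain ⟨P, hP, hle⟩ := exists_le_isAssociatedPrime_of_isNoetherianRing R t hne
  have := hP.isPrime
  obtain ⟨k, hk⟩ := ht
  have hmem : ∀ r, r • t = 0 → r ∈ P := fun r hr => hle (by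
    rw [Submodule.mem_colon_singleton, Submodule.mem_bot]; exact hr)
  have hpP : p ≤ P := by
    intro r hr
    exact this.mem_of_pow_mem k (hmem _ (hk _ (Ideal.pow_mem_pow hr k)))
  refine hq P (lt_of_le_of_ne hpP ?_) hP
  rintro rfl
  exact hs (hmem s h0)

/-- Lifting. -/
lemma GI.lift (h : GI.Cpx d) (hom_exact : ∀ (E : Type u) [AddCommGroup E] [Module R E],
      Module.Injective R E → ∀ (i : ℤ) (f : E →ₗ[R] I (i + 1)), (d i).comp f = 0 →
      ∃ g : E →ₗ[R] I (i + 1 + 1), (d (i + 1)).comp g = f) (i : ℤ)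
    (hq : ∀ q : Ideal R, p < q → ¬ IsAssociatedPrime q (LinearMap.ker (d i)))
    {E : Type u} [AddCommGroup E] [Module R E] [Module (Localization.AtPrime p) E]
    [IsScalarTower R (Localization.AtPrime p) E]
    (hE : Module.Injective (Localization.AtPrime p) E)
    (hEt : ∀ e : E, e ∈ GI.Gam (maximalIdeal (Localization.AtPrime p)) E)
    (f : E →ₗ[Localization.AtPrime p] LocalizedModule p.primeCompl (I (i + 1)))
    (hf : (GI.L p.primeCompl (d i)).comp f = 0) :
    ∃ g : E →ₗ[Localization.AtPrime p] LocalizedModule p.primeCompl (I (i + 1 + 1)),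
      (GI.L p.primeCompl (d (i + 1))).comp g = f := by
  let T : Submodule R (I (i + 1)) := GI.Gam p _ ⊓ LinearMap.ker (d i)
  have hinj : ∀ t ∈ T, ∀ s : R, s ∉ p → s • t = 0 → t = 0 := by
    rintro t ⟨ht, ht'⟩ s hs h0
    have := GI.torsion_inj p hq (t := (⟨t, ht'⟩ : LinearMap.ker (d i)))
      (by obtain ⟨k, hk⟩ := ht; exact ⟨k, fun r hr => Subtype.ext (hk r hr)⟩) hs (Subtype.ext h0)
    exact congrArg Subtype.val this
  have hsurj : ∀ t ∈ T, ∀ s : R, s ∉ p → ∃ t' ∈ T, s • t' = t := by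
    rintro t ht s hs
    obtain ⟨z, hz, rfl⟩ := GI.Gam_exact h p i t ht.1 ht.2
    obtain ⟨k, w, hw⟩ := GI.inj_div (GI.Gam_injective p (h.inj _)) s ⟨z, hz⟩ 1
    have hwT : d (i + 1) w ∈ T := ⟨GI.Gam_map _ w.2, h.dd _ _⟩
    refine ⟨d (i + 1) w, hwT, ?_⟩
    rw [← sub_eq_zero]
    refine hinj _ (T.sub_mem (T.smul_mem _ hwT) ht) (s ^ k)
      (fun hh => hs ((inferInstance : p.IsPrime).mem_of_pow_mem k hh)) ?_
    have h3 := congrArg (fun w => d (i + 1) (Subtype.val w)) hw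
    simpa [map_sub, smul_sub] using h3
  let ι : T →ₗ[R] LocalizedModule p.primeCompl (I (i + 1)) :=
    (LocalizedModule.mkLinearMap p.primeCompl (I (i + 1))).comp T.subtype
  have hι : Function.Injective ι := by
    rw [injective_iff_map_eq_zero]
    intro t ht
    obtain ⟨u, hu⟩ := (GI.mk_eq_zero _).mp (show LocalizedModule.mk (t : I (i + 1)) 1 = 0 from ht)
    exact Subtype.ext (hinj t t.2 u u.2 hu)
  have hr : ∀ e, f e ∈ LinearMap.range ι := by
    intro e
    obtain ⟨n, hn, hn0, s, hs⟩ := GI.torsion_rep p (d i) (f e) (GI.Gam_map f (hEt e))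
      (LinearMap.congr_fun hf e)
    obtain ⟨t', ht', rfl⟩ := hsurj n ⟨hn, hn0⟩ s s.2
    refine ⟨⟨t', ht'⟩, ?_⟩
    rw [hs]
    exact (LocalizedModule.mk_cancel s t').symm
  let f' : E →ₗ[R] T := (LinearEquiv.ofInjective ι hι).symm.toLinearMap.comp
    ((f.restrictScalars R).codRestrict (LinearMap.range ι) hr)
  have hf' : ∀ e, ι (f' e) = f e := fun e =>
    congrArg Subtype.val ((LinearEquiv.ofInjective ι hι).apply_symm_apply ⟨f e, hr e⟩)
  obtain ⟨g, hg⟩ := hom_exact E (GI.restrict_inj p.primeCompl hE) i (T.subtype.comp f')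
    (by ext e; exact (f' e).2.2)
  refine ⟨((LocalizedModule.mkLinearMap p.primeCompl (I (i + 1 + 1))).comp
    g).extendScalarsOfIsLocalization p.primeCompl (Localization.AtPrime p), ?_⟩
  ext e
  rw [← hf' e]
  have h1 := LinearMap.congr_fun hg e
  change GI.L p.primeCompl (d (i + 1)) (LocalizedModule.mk (g e) 1) =
    LocalizedModule.mk (f' e : I (i + 1)) 1
  rw [GI.L_mk]
  congr 1

end PartFour

section PartFive

open IsLocalRing

lemma GI.width_le {A : Type u} [CommRing A] [IsLocalRing A] {N : Type u} [AddCommGroup N]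
    [Module A N] {n : ℕ} (h : ¬ GI.EV A n N) : modWidth A N ≤ n :=
  sInf_le ⟨n, rfl, fun hs => h ((GI.tor_iff N n).mp hs)⟩

lemma GI.le_width {A : Type u} [CommRing A] [IsLocalRing A] {N : Type u} [AddCommGroup N]
    [Module A N] {n : ℕ} (h : ∀ j < n, GI.EV A j N) : (n : ℕ∞) ≤ modWidth A N := by
  refine le_sInf ?_
  rintro _ ⟨j, rfl, hj⟩
  by_contra hlt
  have : j < n := by simpa using hlt
  exact hj ((GI.tor_iff N j).mpr (h j this))

lemma GI.width_top {A : Type u} [CommRing A] [IsLocalRing A] {N : Type u} [AddCommGroup N]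
    [Module A N] (h : ∀ j, GI.EV A j N) : modWidth A N = ⊤ := by
  refine sInf_eq_top.mpr ?_
  rintro _ ⟨j, rfl, hj⟩
  exact absurd ((GI.tor_iff N j).mpr (h j)) hj

lemma GI.Ann_bot_exact {R : Type u} [CommRing R] {I : ℤ → Type u} [∀ i, AddCommGroup (I i)]
    [∀ i, Module R (I i)] {d : ∀ i : ℤ, I (i + 1) →ₗ[R] I i} (h : GI.Cpx d) :
    GI.SubExact d (fun i => GI.Ann (⊥ : Ideal R) (I i)) := by
  intro i y _ hy
  obtain ⟨z, hz⟩ := h.ex i y hy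
  refine ⟨z, fun r hr => ?_, hz⟩
  rw [(Submodule.mem_bot R).mp hr, zero_smul]

lemma GI.K_bot {A : Type u} [CommRing A] {I : ℤ → Type u} [∀ i, AddCommGroup (I i)]
    [∀ i, Module A (I i)] (d : ∀ i : ℤ, I (i + 1) →ₗ[A] I i) (i : ℤ) :
    GI.K d i ⊥ = LinearMap.ker (d i) := by
  refine inf_eq_right.mpr (fun y _ r hr => ?_)
  rw [(Submodule.mem_bot A).mp hr, zero_smul]

variable {R : Type u} [CommRing R] [IsNoetherianRing R] (p : Ideal R) [p.IsPrime]
variable {I : ℤ → Type u} [∀ i, AddCommGroup (I i)] [∀ i, Module R (I i)]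
  {d : ∀ i : ℤ, I (i + 1) →ₗ[R] I i}

/-- The upper bound. -/
lemma GI.upper (h : GI.Cpx d) (hom_exact : ∀ (E : Type u) [AddCommGroup E] [Module R E],
      Module.Injective R E → ∀ (i : ℤ) (f : E →ₗ[R] I (i + 1)), (d i).comp f = 0 →
      ∃ g : E →ₗ[R] I (i + 1 + 1), (d (i + 1)).comp g = f) (i : ℤ)
    (hp : IsAssociatedPrime p (LinearMap.ker (d i)))
    (hq : ∀ q : Ideal R, p < q → ¬ IsAssociatedPrime q (LinearMap.ker (d i))) :
    ∃ rs : List (Localization.AtPrime p),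
      (∀ r ∈ rs, r ∈ maximalIdeal (Localization.AtPrime p)) ∧
      RingTheory.Sequence.IsRegular (Localization.AtPrime p) rs ∧
      ¬ GI.EV (Localization.AtPrime p) rs.length (LinearMap.ker (GI.L p.primeCompl (d i))) := by
  have hN : IsNoetherianRing (Localization.AtPrime p) :=
    IsLocalization.isNoetherianRing p.primeCompl _ inferInstance
  obtain ⟨rs, hm, hr, s, hs, hsm⟩ := GI.exists_max (Localization.AtPrime p)
  refine ⟨rs, hm, hr, fun hE => ?_⟩
  have hL := GI.L_cpx p.primeCompl h
  obtain ⟨-, h2, h3⟩ := GI.chain hL i rs ⊥ (GI.Ann_bot_exact hL) hm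
    (GI.WR_of_regular hr.toIsWeaklyRegular)
  rw [bot_sup_eq] at h2 h3
  rw [GI.K_bot] at h2
  have hsoc := GI.soc_surj hL i h3 hs hsm (h2 hE)
  let E := GI.Gam (maximalIdeal (Localization.AtPrime p))
    (LocalizedModule p.primeCompl (I (i + 1 + 1)))
  have hEt : ∀ e : E, e ∈ GI.Gam (maximalIdeal (Localization.AtPrime p)) E := by
    rintro ⟨e, k, hk⟩
    exact ⟨k, fun r hr => Subtype.ext (hk r hr)⟩
  have hEi : Module.Injective (Localization.AtPrime p) E := GI.Gam_injective _ (hL.inj _)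
  have hz := GI.hom_zero hL i hsoc hEt (fun f hf => GI.lift p h hom_exact i hq hEi hEt f hf)
    ((GI.L p.primeCompl (d (i + 1))).comp E.subtype) (by ext e; exact hL.dd _ _)
  obtain ⟨-, ⟨x, hx0⟩, hx⟩ := isAssociatedPrime_iff.mp hp
  have hmem : ∀ r : R, r ∈ p ↔ r • x = 0 := by
    intro r
    rw [hx, Submodule.mem_colon_singleton, Submodule.mem_bot]
    exact Subtype.ext_iff
  have hxG : x ∈ GI.Gam p (I (i + 1)) := ⟨1, fun r hr => (hmem r).mp (by simpa using hr)⟩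
  obtain ⟨e, he, he'⟩ := GI.Gam_exact hL (maximalIdeal (Localization.AtPrime p)) i
    (LocalizedModule.mk x 1) (GI.Gam_mk p hxG 1)
    (by rw [GI.L_mk, show d i x = 0 from hx0, LocalizedModule.zero_mk])
  have h4 := LinearMap.congr_fun hz ⟨e, he⟩
  rw [LinearMap.comp_apply, Submodule.subtype_apply] at h4
  simp only at h4
  rw [he', LinearMap.zero_apply] at h4
  obtain ⟨u, hu⟩ := (GI.mk_eq_zero _).mp h4
  exact u.2 ((hmem u).mpr hu)

/-- Nonassociated primes are not in the small support. -/
lemma GI.not_ass (h : GI.Cpx d) (i : ℤ) (hp : ¬ IsAssociatedPrime p (LinearMap.ker (d i))) (j : ℕ) :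
    GI.EV (Localization.AtPrime p) j (LinearMap.ker (GI.L p.primeCompl (d i))) := by
  have hN : IsNoetherianRing (Localization.AtPrime p) :=
    IsLocalization.isNoetherianRing p.primeCompl _ inferInstance
  refine GI.EV_of_Gam_zero (GI.L_cpx p.primeCompl h) i ?_ j
  intro y hy hy0
  by_contra hne
  obtain ⟨n, ⟨k, hk⟩, hn0, s, rfl⟩ := GI.torsion_rep p (d i) y hy hy0
  refine hp ⟨inferInstance, ⟨n, hn0⟩, le_antisymm ?_ ?_⟩
  · intro r hr
    refine ⟨k, ?_⟩
    rw [Submodule.mem_colon_singleton, Submodule.mem_bot]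
    exact Subtype.ext (hk _ (Ideal.pow_mem_pow hr k))
  · rw [(inferInstance : p.IsPrime).radical_le_iff]
    intro r hr
    rw [Submodule.mem_colon_singleton, Submodule.mem_bot] at hr
    by_contra hrp
    exact hne ((GI.mk_eq_zero _).mpr ⟨⟨r, hrp⟩, congrArg Subtype.val hr⟩)

end PartFive

theorem modWidth_eq_ringDepth_of_maximal_in_small_support
    (R : Type u) [CommRing R] [IsNoetherianRing R]
    (J : Type u) [AddCommGroup J] [Module R J] (hJ : IsGorensteinInjective R J)
    (p : Ideal R) [p.IsPrime]
    (hfin : modWidth (Localization.AtPrime p) (LocalizedModule p.primeCompl J) < ⊤)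
    (hmax : ∀ (q : Ideal R) [q.IsPrime], p < q →
      modWidth (Localization.AtPrime q) (LocalizedModule q.primeCompl J) = ⊤) :
    modWidth (Localization.AtPrime p) (LocalizedModule p.primeCompl J) =
      ringDepth (Localization.AtPrime p) := by
  obtain ⟨W⟩ := hJ
  obtain ⟨e⟩ := W.ker_iso
  let I := W.I
  letI : ∀ i, AddCommGroup (I i) := W.acg
  letI : ∀ i, Module R (I i) := W.mod
  have h : GI.Cpx (I := I) W.d := ⟨W.inj, fun i x => LinearMap.congr_fun (W.d_comp_d i) x,
    fun i y hy => by
      have : y ∈ LinearMap.range (W.d (i + 1)) := by rw [← W.exact]; exact hy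
      exact this⟩
  have hequiv : ∀ (q : Ideal R) [q.IsPrime], Nonempty (LocalizedModule q.primeCompl J
      ≃ₗ[Localization.AtPrime q] LinearMap.ker (GI.L q.primeCompl (W.d (-1)))) :=
    fun q _ => GI.L_ker q.primeCompl (W.d (-1)) e
  have hp : IsAssociatedPrime p (LinearMap.ker (W.d (-1))) := by
    by_contra hp
    obtain ⟨e'⟩ := hequiv p
    exact hfin.ne (GI.width_top (fun j => GI.EV_of_equiv e'.symm (GI.not_ass p h (-1) hp j)))
  have hq : ∀ q : Ideal R, p < q → ¬ IsAssociatedPrime q (LinearMap.ker (W.d (-1))) := by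
    intro q hpq hq
    obtain ⟨P, ⟨hpP, hP⟩, hPmax⟩ := set_has_maximal_iff_noetherian.mpr
      (inferInstance : IsNoetherian R R)
      {q : Ideal R | p < q ∧ IsAssociatedPrime q (LinearMap.ker (W.d (-1)))} ⟨q, hpq, hq⟩
    have := hP.isPrime
    obtain ⟨rs, -, -, hE⟩ := GI.upper P h W.hom_exact (-1) hP
      (fun Q hQ hQ' => hPmax Q ⟨hpP.trans hQ, hQ'⟩ hQ)
    obtain ⟨e'⟩ := hequiv P
    have h1 := GI.width_le (fun hh => hE (GI.EV_of_equiv e' hh))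
    rw [hmax P hpP] at h1
    exact absurd h1 (by simp)
  obtain ⟨e'⟩ := hequiv p
  apply le_antisymm
  · obtain ⟨rs, hm, hr, hE⟩ := GI.upper p h W.hom_exact (-1) hp hq
    exact (GI.width_le (fun hh => hE (GI.EV_of_equiv e' hh))).trans (le_sSup ⟨rs, rfl, hm, hr⟩)
  · refine sSup_le ?_
    rintro _ ⟨rs, rfl, hm, hr⟩
    have hL := GI.L_cpx p.primeCompl h
    obtain ⟨h1, -, -⟩ := GI.chain hL (-1) rs ⊥ (GI.Ann_bot_exact hL) hm
      (GI.WR_of_regular hr.toIsWeaklyRegular)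
    rw [GI.K_bot] at h1
    exact GI.le_width (fun j hj => GI.EV_of_equiv e'.symm (h1 j hj))
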